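/- arXiv:1703.02444 — 2 statements merged into one kernel-verified Lean document; each statement's English description precedes it below -/
import Mathlib

section
/- Let G be a finite simple graph containing a simple cycle C, and let A and B be two distinct odd-cardinality subsets of the edge set of C. Then no point of Q(G) violates both the odd cycle inequality OC(A) and the odd cycle inequality OC(B); i.e., the portions of Q(G) removed by OC(A) and by OC(B) are disjoint. -/
open MeasureTheory Filter

noncomputable section

/-- The standard relaxation `Q(G)` of the boolean quadric polytope of a graph `G`:
the set of points of `[0,1]^(V + E)` satisfying, for each edge `(i,j)`,
`0 ≤ y_{ij}`, `y_{ij} ≤ x_i`, `y_{ij} ≤ x_j` and `x_i + x_j ≤ 1 + y_{ij}`. -/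
def QSet {V : Type*} (G : SimpleGraph V) : Set ((V → ℝ) × (↥G.edgeSet → ℝ)) :=
  {p | (∀ i, p.1 i ∈ Set.Icc (0 : ℝ) 1) ∧ (∀ e, p.2 e ∈ Set.Icc (0 : ℝ) 1) ∧
    ∀ (i j : V) (h : G.Adj i j),
      0 ≤ p.2 ⟨s(i, j), (SimpleGraph.mem_edgeSet _).mpr h⟩ ∧
      p.2 ⟨s(i, j), (SimpleGraph.mem_edgeSet _).mpr h⟩ ≤ p.1 i ∧
      p.2 ⟨s(i, j), (SimpleGraph.mem_edgeSet _).mpr h⟩ ≤ p.1 j ∧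
      p.1 i + p.1 j ≤ 1 + p.2 ⟨s(i, j), (SimpleGraph.mem_edgeSet _).mpr h⟩}

/-- The odd cycle inequality `OC(A)` associated to a closed walk `c` in `G` and a
subset `A` of the edges of `c`:
`∑_{i ∈ S₂} x_i - ∑_{i ∈ S₀} x_i + ∑_{e ∈ E(C)\A} y_e - ∑_{e ∈ A} y_e ≤ ⌊|A|/2⌋`,
where `S₂` (resp. `S₀`) is the set of vertices of `c` incident to exactly two
(resp. zero) edges of `A`. -/
def OCW {V : Type*} [Fintype V] [DecidableEq V] (G : SimpleGraph V) [DecidableRel G.Adj]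
    {u : V} (c : G.Walk u u) (A : Finset G.edgeSet)
    (p : (V → ℝ) × (↥G.edgeSet → ℝ)) : Prop :=
  (∑ i ∈ Finset.univ.filter (fun i : V => i ∈ c.support ∧
      (A.filter fun e : G.edgeSet => i ∈ (e : Sym2 V)).card = 2), p.1 i)
  - (∑ i ∈ Finset.univ.filter (fun i : V => i ∈ c.support ∧
      (A.filter fun e : G.edgeSet => i ∈ (e : Sym2 V)).card = 0), p.1 i)
  + (∑ e ∈ Finset.univ.filter
      (fun e : G.edgeSet => (e : Sym2 V) ∈ c.edges ∧ e ∉ A), p.2 e)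
  - (∑ e ∈ A, p.2 e) ≤ ((A.card / 2 : ℕ) : ℝ)

/-!
The values `x_i + x_j - 2 y_{ij}` on the edges of the cycle form a point `z` of the cube
`[0,1]^{E(C)}`. Every vertex of `C` has degree two in `C`, so `OC(A)` for odd `|A|` says exactly
that the `ℓ¹` distance from `z` to the indicator vector of `A` is at least `1`; for even `|A|` it
only says that this distance is nonnegative. Distinct odd subsets differ in at least two elements,
so by the triangle inequality `z` cannot be at distance less than `1` from both indicator vectors.
-/

open Finset

open scoped symmDiff

section IndicatorDist

variable {α : Type*} [DecidableEq α] {A B E : Finset α}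

lemma two_le_card_symmDiff (hne : A ≠ B) (hcard : #A ≡ #B [MOD 2]) : 2 ≤ #(A ∆ B) := by
  have hpos : 0 < #(A ∆ B) := card_pos.mpr (symmDiff_nonempty.mpr hne)
  have hsum : #(A ∆ B) = #(A \ B) + #(B \ A) := card_union_of_disjoint disjoint_sdiff_sdiff
  have hA := card_sdiff_add_card_inter A B
  have hB := card_sdiff_add_card_inter B A
  rw [inter_comm] at hB
  unfold Nat.ModEq at hcard
  lia

/-- The `ℓ¹` distance in `ℝ^E` from the restriction of `z` to the indicator vector of `A`. -/
def indicatorDist (E A : Finset α) (z : α → ℝ) : ℝ :=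
  ∑ e ∈ E, |(if e ∈ A then 1 else 0) - z e|

lemma indicatorDist_nonneg (E A : Finset α) (z : α → ℝ) : 0 ≤ indicatorDist E A z :=
  sum_nonneg fun _ _ ↦ abs_nonneg _

lemma card_symmDiff_le_indicatorDist_add (hA : A ⊆ E) (hB : B ⊆ E) (z : α → ℝ) :
    (#(A ∆ B) : ℝ) ≤ indicatorDist E A z + indicatorDist E B z := by
  have hsub : A ∆ B ⊆ E := symmDiff_subset_union.trans (union_subset hA hB)
  calc (#(A ∆ B) : ℝ) = ∑ e ∈ E, if e ∈ A ∆ B then 1 else 0 := by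
        rw [sum_boole, filter_mem_eq_inter, inter_eq_right.mpr hsub]
    _ = ∑ e ∈ E, |(if e ∈ A then (1 : ℝ) else 0) - if e ∈ B then 1 else 0| := by
        refine sum_congr rfl fun e _ ↦ ?_
        by_cases heA : e ∈ A <;> by_cases heB : e ∈ B <;> simp [mem_symmDiff, heA, heB]
    _ ≤ ∑ e ∈ E, (|(if e ∈ A then 1 else 0) - z e| + |(if e ∈ B then 1 else 0) - z e|) := by
        gcongr with e
        rw [abs_sub_comm _ (z e), abs_sub_comm _ (z e), abs_sub_comm (z e)]
        exact abs_sub_le _ _ _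
    _ = indicatorDist E A z + indicatorDist E B z := sum_add_distrib

lemma indicatorDist_eq_of_mem_Icc (hA : A ⊆ E) {z : α → ℝ}
    (hz : ∀ e ∈ E, z e ∈ Set.Icc (0 : ℝ) 1) :
    indicatorDist E A z = #A + ∑ e ∈ E \ A, z e - ∑ e ∈ A, z e := by
  have hmem : ∑ e ∈ A, |(if e ∈ A then 1 else 0) - z e| = ∑ e ∈ A, (1 - z e) :=
    sum_congr rfl fun e he ↦ by
      rw [if_pos he, abs_of_nonneg (sub_nonneg.mpr (hz e (hA he)).2)]
  have hnotMem : ∑ e ∈ E \ A, |(if e ∈ A then 1 else 0) - z e| = ∑ e ∈ E \ A, z e :=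
    sum_congr rfl fun e he ↦ by
      obtain ⟨heE, heA⟩ := mem_sdiff.mp he
      rw [if_neg heA, zero_sub, abs_neg, abs_of_nonneg (hz e heE).1]
  rw [indicatorDist, ← sum_sdiff hA, hmem, hnotMem, sum_sub_distrib, sum_const, nsmul_one]
  ring

end IndicatorDist

section IncidenceCount

variable {V : Type*} [DecidableEq V] {G : SimpleGraph V}

/-- The degree of the vertex `i` in the subgraph with edge set `F`. -/
def incidenceCount (F : Finset G.edgeSet) (i : V) : ℕ :=
  #(F.filter fun e : G.edgeSet ↦ i ∈ (e : Sym2 V))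

lemma incidenceCount_sdiff_add {A E : Finset G.edgeSet} (hA : A ⊆ E) (i : V) :
    incidenceCount (E \ A) i + incidenceCount A i = incidenceCount E i := by
  simp only [incidenceCount, card_filter]
  exact sum_sdiff hA

lemma sum_sum_endpoints {F : Finset G.edgeSet} {S : Finset V}
    (hS : ∀ e ∈ F, ∀ i ∈ (e : Sym2 V), i ∈ S) (x : V → ℝ) :
    ∑ e ∈ F, ∑ i ∈ (e : Sym2 V).toFinset, x i = ∑ i ∈ S, incidenceCount F i * x i := by
  calc ∑ e ∈ F, ∑ i ∈ (e : Sym2 V).toFinset, x i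
    _ = ∑ i ∈ S, ∑ _e ∈ F.filter fun e : G.edgeSet ↦ i ∈ (e : Sym2 V), x i := by
        refine sum_comm' fun _ _ ↦ ?_
        rw [mem_filter, Sym2.mem_toFinset]
        exact ⟨fun ⟨he, hi⟩ ↦ ⟨⟨he, hi⟩, hS _ he _ hi⟩, And.left⟩
    _ = ∑ i ∈ S, incidenceCount F i * x i := by
        simp only [sum_const, nsmul_eq_mul, incidenceCount]

lemma sum_endpoints_sub_sum_endpoints_sdiff {A E : Finset G.edgeSet} (hA : A ⊆ E) {S : Finset V}
    (hS : ∀ e ∈ E, ∀ i ∈ (e : Sym2 V), i ∈ S) (hdeg : ∀ i ∈ S, incidenceCount E i = 2)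
    (x : V → ℝ) :
    ∑ e ∈ A, ∑ i ∈ (e : Sym2 V).toFinset, x i - ∑ e ∈ E \ A, ∑ i ∈ (e : Sym2 V).toFinset, x i =
      2 * (∑ i ∈ S with incidenceCount A i = 2, x i -
        ∑ i ∈ S with incidenceCount A i = 0, x i) := by
  rw [sum_sum_endpoints fun e he ↦ hS e (hA he),
    sum_sum_endpoints fun e he ↦ hS e (mem_sdiff.mp he).1,
    sum_filter, sum_filter, ← sum_sub_distrib, ← sum_sub_distrib, mul_sum]
  refine sum_congr rfl fun i hi ↦ ?_
  have hsplit : incidenceCount (E \ A) i + incidenceCount A i = 2 :=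
    (incidenceCount_sdiff_add hA i).trans (hdeg i hi)
  obtain ⟨hnot, hin⟩ | ⟨hnot, hin⟩ | ⟨hnot, hin⟩ := Nat.add_eq_two_iff.mp hsplit <;>
    simp [hnot, hin]

end IncidenceCount

section CutValue

variable {V : Type*} [DecidableEq V] {G : SimpleGraph V}

/-- The value `x_i + x_j - 2 y_{ij}` on the edge `(i, j)`; it is the edge coordinate of the
covariance map, which sends the boolean quadric polytope to the cut polytope. -/
def cutValue (p : (V → ℝ) × (G.edgeSet → ℝ)) (e : G.edgeSet) : ℝ :=
  ∑ i ∈ (e : Sym2 V).toFinset, p.1 i - 2 * p.2 e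

lemma sum_cutValue (p : (V → ℝ) × (G.edgeSet → ℝ)) (F : Finset G.edgeSet) :
    ∑ e ∈ F, cutValue p e = ∑ e ∈ F, ∑ i ∈ (e : Sym2 V).toFinset, p.1 i - 2 * ∑ e ∈ F, p.2 e := by
  simp only [cutValue, sum_sub_distrib, mul_sum]

lemma cutValue_mem_Icc {p : (V → ℝ) × (G.edgeSet → ℝ)} (hp : p ∈ QSet G) (e : G.edgeSet) :
    cutValue p e ∈ Set.Icc (0 : ℝ) 1 := by
  obtain ⟨e, he⟩ := e
  induction e with | _ i j
  have hij : G.Adj i j := he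
  obtain ⟨hy, hyi, hyj, hxy⟩ := hp.2.2 i j hij
  have hval : cutValue p ⟨s(i, j), hij⟩ = p.1 i + p.1 j - 2 * p.2 ⟨s(i, j), hij⟩ := by
    rw [cutValue, Sym2.toFinset_mk_eq, sum_pair hij.ne]
  exact hval ▸ ⟨by linarith, by linarith⟩

end CutValue

section OddCycle

variable {V : Type*} [Fintype V] [DecidableEq V] {G : SimpleGraph V} [DecidableRel G.Adj] {u v : V}
  {c : G.Walk u u} {A B : Finset G.edgeSet} {p : (V → ℝ) × (G.edgeSet → ℝ)}

/-- The set of edges of a walk, as a finset of edges of the ambient graph. -/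
def walkEdges (c : G.Walk u v) : Finset G.edgeSet :=
  univ.filter fun e : G.edgeSet ↦ (e : Sym2 V) ∈ c.edges

lemma mem_walkEdges {c : G.Walk u v} {e : G.edgeSet} :
    e ∈ walkEdges c ↔ (e : Sym2 V) ∈ c.edges := by
  simp [walkEdges]

lemma incidenceCount_walkEdges (c : G.Walk u v) (i : V) :
    incidenceCount (walkEdges c) i = (c.toSubgraph.neighborSet i).ncard := by
  rw [incidenceCount, ← Set.ncard_coe_finset]
  symm
  refine Set.ncard_congr (fun w hw ↦ ⟨s(i, w), c.toSubgraph.adj_sub hw⟩) ?_ ?_ ?_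
  · intro w hw
    simpa [mem_walkEdges] using c.adj_toSubgraph_iff_mem_edges.mp hw
  · intro w w' _ _ h
    exact Sym2.congr_right.mp (congrArg Subtype.val h)
  · rintro ⟨e, he⟩ h
    obtain ⟨hec, hie⟩ := mem_filter.mp (mem_coe.mp h)
    obtain ⟨w, rfl⟩ := Sym2.mem_iff_exists.mp hie
    exact ⟨w, c.adj_toSubgraph_iff_mem_edges.mpr (mem_walkEdges.mp hec), rfl⟩

lemma incidenceCount_walkEdges_of_isCycle (hc : c.IsCycle) {i : V} (hi : i ∈ c.support) :
    incidenceCount (walkEdges c) i = 2 := by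
  rw [incidenceCount_walkEdges, hc.ncard_neighborSet_toSubgraph_eq_two hi]

lemma ocw_iff_card_mod_two_le (hc : c.IsCycle) (hA : A ⊆ walkEdges c) :
    OCW G c A p ↔ ((#A % 2 : ℕ) : ℝ) ≤
      #A + ∑ e ∈ walkEdges c \ A, cutValue p e - ∑ e ∈ A, cutValue p e := by
  have hvert := sum_endpoints_sub_sum_endpoints_sdiff hA (S := c.support.toFinset)
    (fun e he i hi ↦ List.mem_toFinset.mpr
      (c.mem_support_of_mem_edges (mem_walkEdges.mp he) hi))
    (fun i hi ↦ incidenceCount_walkEdges_of_isCycle hc (List.mem_toFinset.mp hi)) p.1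
  have hcard : (#A : ℝ) = 2 * (#A / 2 : ℕ) + (#A % 2 : ℕ) := mod_cast (Nat.div_add_mod _ _).symm
  have hverts (k : ℕ) : c.support.toFinset.filter (incidenceCount A · = k) =
      univ.filter fun i ↦ i ∈ c.support ∧ incidenceCount A i = k := by ext; simp
  have hedges : walkEdges c \ A =
      univ.filter fun e : G.edgeSet ↦ (e : Sym2 V) ∈ c.edges ∧ e ∉ A := by
    ext; simp [mem_walkEdges]
  rw [hverts, hverts] at hvert
  rw [sum_cutValue, sum_cutValue, OCW, ← hedges]
  unfold incidenceCount at hvert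
  -- The right-hand side is twice `OC(A)`, as `#A - #A % 2 = 2 * ⌊#A / 2⌋`.
  constructor <;> intro h <;> linarith

lemma ocw_iff_one_le_indicatorDist (hc : c.IsCycle) (hA : A ⊆ walkEdges c) (hp : p ∈ QSet G) :
    OCW G c A p ↔ (Odd #A → 1 ≤ indicatorDist (walkEdges c) A (cutValue p)) := by
  rw [ocw_iff_card_mod_two_le hc hA,
    ← indicatorDist_eq_of_mem_Icc hA fun e _ ↦ cutValue_mem_Icc hp e]
  obtain hpar | hpar := Nat.even_or_odd #A
  · simp [Nat.even_iff.mp hpar, Nat.not_odd_iff_even.mpr hpar, indicatorDist_nonneg]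
  · simp [Nat.odd_iff.mp hpar, hpar]

theorem oddCycle_ineqs_disjoint_general (hc : c.IsCycle)
    (hAc : ∀ e ∈ A, (e : Sym2 V) ∈ c.edges) (hBc : ∀ e ∈ B, (e : Sym2 V) ∈ c.edges)
    (hAB : A ≠ B) : ∀ p ∈ QSet G, OCW G c A p ∨ OCW G c B p := by
  intro p hp
  have hAE : A ⊆ walkEdges c := fun e he ↦ mem_walkEdges.mpr (hAc e he)
  have hBE : B ⊆ walkEdges c := fun e he ↦ mem_walkEdges.mpr (hBc e he)
  by_contra! hviol
  rw [ocw_iff_one_le_indicatorDist hc hAE hp, ocw_iff_one_le_indicatorDist hc hBE hp] at hviol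
  push Not at hviol
  obtain ⟨⟨hA, hdistA⟩, hB, hdistB⟩ := hviol
  have hcard : (2 : ℝ) ≤ #(A ∆ B) := mod_cast two_le_card_symmDiff hAB
    ((Nat.odd_iff.mp hA).trans (Nat.odd_iff.mp hB).symm)
  have htriangle := card_symmDiff_le_indicatorDist_add hAE hBE (cutValue p)
  linarith

end OddCycle

/-- Distinct odd cycle inequalities coming from a single simple cycle of `G` cut off
disjoint parts of `Q(G)`: no point of `Q(G)` violates both. -/
theorem oddCycle_ineqs_disjoint {V : Type} [Fintype V] [DecidableEq V]
    (G : SimpleGraph V) [DecidableRel G.Adj] {u : V}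
    (c : G.Walk u u) (hc : c.IsCycle)
    (A B : Finset G.edgeSet)
    (hAc : ∀ e ∈ A, (e : Sym2 V) ∈ c.edges) (hBc : ∀ e ∈ B, (e : Sym2 V) ∈ c.edges)
    (hA : Odd A.card) (hB : Odd B.card) (hAB : A ≠ B) :
    ∀ p ∈ QSet G, OCW G c A p ∨ OCW G c B p :=
  oddCycle_ineqs_disjoint_general hc hAc hBc hAB
end
end

section
/- Let m >= 3 and let A be any odd-cardinality subset of the edge set of the cycle C_m. Then the 2m-dimensional Lebesgue volume of the set of points of Q(C_m) that violate the odd cycle inequality OC(A) equals 1 / (2 * (2m)!). -/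
open MeasureTheory Filter

noncomputable section

/-- The cycle `C_m` with `m` vertices and (for `m ≥ 3`) `m` edges. -/
def cycleG (m : ℕ) : SimpleGraph (Fin m) :=
  SimpleGraph.fromRel (fun i j => ((i : ℕ) + 1) % m = (j : ℕ))

instance (m : ℕ) : DecidableRel (cycleG m).Adj := fun i j =>
  decidable_of_iff _ (SimpleGraph.fromRel_adj _ i j).symm

/-- The odd cycle inequality `OC(A)` for the cycle graph `C_m` and a subset `A` of its
edges: `∑_{i ∈ S₂} x_i - ∑_{i ∈ S₀} x_i + ∑_{e ∉ A} y_e - ∑_{e ∈ A} y_e ≤ ⌊|A|/2⌋`,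
where `S₂` (resp. `S₀`) is the set of vertices incident to exactly two (resp. zero)
edges of `A`. -/
def OC {m : ℕ} (A : Finset (cycleG m).edgeSet)
    (p : (Fin m → ℝ) × (↥(cycleG m).edgeSet → ℝ)) : Prop :=
  (∑ i ∈ Finset.univ.filter
      (fun i : Fin m =>
        (A.filter fun e : (cycleG m).edgeSet => i ∈ (e : Sym2 (Fin m))).card = 2), p.1 i)
  - (∑ i ∈ Finset.univ.filter
      (fun i : Fin m =>
        (A.filter fun e : (cycleG m).edgeSet => i ∈ (e : Sym2 (Fin m))).card = 0), p.1 i)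
  + (∑ e ∈ Aᶜ, p.2 e) - (∑ e ∈ A, p.2 e) ≤ ((A.card / 2 : ℕ) : ℝ)

/-!
Orient the cycle and write `σ i` for the successor of the vertex `i`. The point with all
`x i = 1/2`, `y e = 0` for `e ∈ A` and `y e = 1/2` for `e ∉ A` lies in `Q(C_m)` and makes exactly
two inequalities of each edge tight. Their `2m` slacks are affine coordinates on the whole space; up
to volume-preserving maps, the change of coordinates is `1 - D * P`, with `P` the matrix of `σ` and
`D` the diagonal matrix of the signs `-1` on `A` and `1` off `A`. Only two permutations contribute
to its determinant, which is `1 - (-1) ^ |A| = 2`.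

In the slack coordinates a point violates `OC(A)` if and only if its slacks add up to less than `1`.
For points with nonnegative slacks this already implies the other two inequalities of each edge:
followed the long way round the cycle from `σ i` to `i`, the numbers `x j - 1/2` change, up to sign,
by no more than the slacks of the edges met. So the part cut off is the preimage of a corner simplex
of volume `1 / (2m)!`.
-/

section MeasurePreserving

theorem measurePreserving_comp_equiv {α κ κ' : Type*} [MeasureSpace α]
    [SigmaFinite (volume : Measure α)] [Fintype κ] [Fintype κ'] (e : κ ≃ κ') :
    MeasurePreserving (fun x : κ' → α => x ∘ e) volume volume :=
  (volume_measurePreserving_piCongrLeft (fun _ : κ' => α) e).symm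

theorem measurePreserving_sumElim {α ι κ : Type*} [MeasureSpace α]
    [SigmaFinite (volume : Measure α)] [Fintype ι] [Fintype κ] :
    MeasurePreserving (fun q : (ι → α) × (κ → α) => Sum.elim q.1 q.2) volume volume := by
  have hcoe : ⇑(MeasurableEquiv.sumPiEquivProdPi fun _ : ι ⊕ κ => α).symm =
      fun q => Sum.elim q.1 q.2 := by
    ext q (i | i) <;> rfl
  exact hcoe ▸ volume_measurePreserving_sumPiEquivProdPi_symm fun _ : ι ⊕ κ => α

theorem prod_preimage_prodMap_id {E F : Type*} [NormedAddCommGroup E] [NormedSpace ℝ E]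
    [FiniteDimensional ℝ E] [MeasurableSpace E] [BorelSpace E] [NormedAddCommGroup F]
    [NormedSpace ℝ F] [FiniteDimensional ℝ F] [MeasurableSpace F] [BorelSpace F]
    (μ : Measure E) [μ.IsAddHaarMeasure] (ν : Measure F) [ν.IsAddHaarMeasure] {L : E →ₗ[ℝ] E}
    (hL : LinearMap.det L ≠ 0) (T : Set (E × F)) :
    μ.prod ν (Prod.map L id ⁻¹' T) = ENNReal.ofReal |(LinearMap.det L)⁻¹| * μ.prod ν T := by
  have hdet : LinearMap.det (L.prodMap (LinearMap.id : F →ₗ[ℝ] F)) = LinearMap.det L := by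
    rw [LinearMap.det_prodMap, LinearMap.det_id, mul_one]
  rw [← hdet] at hL ⊢
  exact Measure.addHaar_preimage_linearMap (μ.prod ν) hL T

end MeasurePreserving

section CornerSimplex

/-- The corner simplex of size `c` in `ι → ℝ`: the points with nonnegative coordinates of sum less
than `c`. The facet of sum `c` is left out because violating an inequality is a strict condition. -/
def cornerSimplex (ι : Type*) [Fintype ι] (c : ℝ) : Set (ι → ℝ) :=
  {x | (∀ i, 0 ≤ x i) ∧ ∑ i, x i < c}

theorem measurableSet_cornerSimplex (ι : Type*) [Fintype ι] (c : ℝ) :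
    MeasurableSet (cornerSimplex ι c) := by
  unfold cornerSimplex
  measurability

theorem cornerSimplex_eq_empty (ι : Type*) [Fintype ι] {c : ℝ} (hc : c ≤ 0) :
    cornerSimplex ι c = ∅ :=
  Set.eq_empty_of_forall_notMem fun _ hx =>
    (hx.2.trans_le hc).not_ge (Finset.sum_nonneg fun i _ => hx.1 i)

theorem cons_mem_cornerSimplex_iff {n : ℕ} {c t : ℝ} {x : Fin n → ℝ} :
    (Fin.cons t x : Fin (n + 1) → ℝ) ∈ cornerSimplex (Fin (n + 1)) c ↔
      0 ≤ t ∧ x ∈ cornerSimplex (Fin n) (c - t) := by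
  simp [cornerSimplex, Fin.forall_fin_succ, Fin.sum_univ_succ, lt_sub_iff_add_lt', and_assoc]

theorem volume_cornerSimplex_fin_succ (n : ℕ) (c : ℝ) :
    volume (cornerSimplex (Fin (n + 1)) c) =
      ∫⁻ t in Set.Ico 0 c, volume (cornerSimplex (Fin n) (c - t)) := by
  set φ := (MeasurableEquiv.piFinSuccAbove (fun _ : Fin (n + 1) => ℝ) 0).symm
  have hφ : MeasurePreserving φ volume volume :=
    (volume_preserving_piFinSuccAbove (fun _ : Fin (n + 1) => ℝ) 0).symm
  have hcons (t : ℝ) (x : Fin n → ℝ) : φ (t, x) = Fin.cons t x := Fin.insertNth_zero' t x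
  have hslice (t : ℝ) : volume (Prod.mk t ⁻¹' (φ ⁻¹' cornerSimplex (Fin (n + 1)) c)) =
      (Set.Ico 0 c).indicator (fun t => volume (cornerSimplex (Fin n) (c - t))) t := by
    have hpre : Prod.mk t ⁻¹' (φ ⁻¹' cornerSimplex (Fin (n + 1)) c) =
        {x | 0 ≤ t ∧ x ∈ cornerSimplex (Fin n) (c - t)} := by
      ext x
      rw [Set.mem_preimage, Set.mem_preimage, hcons, cons_mem_cornerSimplex_iff, Set.mem_ofPred_eq]
    rw [hpre]
    by_cases h0 : 0 ≤ t
    · by_cases hc : t < c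
      · simp [h0, hc]
      · simp [h0, hc, cornerSimplex_eq_empty (Fin n) (sub_nonpos.2 (not_lt.1 hc))]
    · simp [h0]
  have hmeas := measurableSet_cornerSimplex (Fin (n + 1)) c
  rw [← hφ.measure_preimage hmeas.nullMeasurableSet, Measure.volume_eq_prod,
    Measure.prod_apply (hφ.measurable hmeas), lintegral_congr hslice,
    lintegral_indicator measurableSet_Ico]

theorem lintegral_Ico_sub_pow_div_factorial (n : ℕ) {c : ℝ} (hc : 0 ≤ c) :
    ∫⁻ t in Set.Ico 0 c, ENNReal.ofReal ((c - t) ^ n / n.factorial) =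
      ENNReal.ofReal (c ^ (n + 1) / (n + 1).factorial) := by
  rw [setLIntegral_congr Ico_ae_eq_Ioc, ← ofReal_integral_eq_lintegral_ofReal,
    ← intervalIntegral.integral_of_le hc, intervalIntegral.integral_div,
    intervalIntegral.integral_comp_sub_left (fun t => t ^ n)]
  · simp only [sub_self, sub_zero, integral_pow, Nat.factorial_succ]
    push_cast
    congr 1
    field_simp
    simp
  · exact (Continuous.integrableOn_Icc (by fun_prop)).mono_set Set.Ioc_subset_Icc_self
  · refine ae_restrict_of_forall_mem measurableSet_Ioc fun t ht => ?_
    have : 0 ≤ c - t := sub_nonneg.2 ht.2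
    simp only [Pi.zero_apply]
    positivity

theorem volume_cornerSimplex_fin (n : ℕ) {c : ℝ} (hc : 0 < c) :
    volume (cornerSimplex (Fin n) c) = ENNReal.ofReal (c ^ n / n.factorial) := by
  induction n generalizing c with
  | zero =>
    have huniv : cornerSimplex (Fin 0) c = Set.univ := by
      ext x
      simp [cornerSimplex, hc]
    rw [huniv, volume_pi, Measure.pi_of_empty]
    simp
  | succ n ih =>
    rw [volume_cornerSimplex_fin_succ, ← lintegral_Ico_sub_pow_div_factorial n hc.le]
    exact setLIntegral_congr_fun measurableSet_Ico fun t ht => ih (sub_pos.2 ht.2)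

theorem volume_cornerSimplex (ι : Type*) [Fintype ι] {c : ℝ} (hc : 0 < c) :
    volume (cornerSimplex ι c) =
      ENNReal.ofReal (c ^ Fintype.card ι / (Fintype.card ι).factorial) := by
  set e := (Fintype.equivFin ι).symm
  have hpre : (fun x : ι → ℝ => x ∘ e) ⁻¹' cornerSimplex (Fin (Fintype.card ι)) c =
      cornerSimplex ι c := by
    ext x
    simp only [cornerSimplex, Set.mem_preimage, Set.mem_ofPred_eq, Function.comp_apply,
      e.sum_comp x, e.forall_congr_right (q := fun i => 0 ≤ x i)]
  rw [← volume_cornerSimplex_fin _ hc, ← hpre]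
  exact (measurePreserving_comp_equiv e).measure_preimage
    (measurableSet_cornerSimplex _ c).nullMeasurableSet

end CornerSimplex

section CyclicPerm

variable {ι : Type*} {σ : Equiv.Perm ι}

theorem eq_one_or_eq_of_forall_apply_eq_self_or_eq [Finite ι] (hσ : σ.IsCycleOn Set.univ)
    {τ : Equiv.Perm ι} (hτ : ∀ i, τ i = i ∨ τ i = σ i) : τ = 1 ∨ τ = σ := by
  refine or_iff_not_imp_left.2 fun hne => ?_
  obtain ⟨i, hi⟩ : ∃ i, τ i ≠ i := by simpa [Equiv.ext_iff] using hne
  have propagate (j : ι) (hj : τ j = σ j) : τ (σ j) = σ (σ j) := by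
    rcases hτ (σ j) with h | h
    · have hfix : σ j = j := τ.injective (h.trans hj.symm)
      rw [hfix, hj, hfix]
    · exact h
  have orbit (n : ℕ) : τ ((σ ^ n) i) = σ ((σ ^ n) i) := by
    induction n with
    | zero => exact (hτ i).resolve_left hi
    | succ n ih => rw [pow_succ']; exact propagate _ ih
  ext j
  obtain ⟨n, rfl⟩ := (hσ.2 (Set.mem_univ i) (Set.mem_univ j)).exists_nat_pow_eq
  exact orbit n

theorem det_one_sub_diagonal_mul_permMatrix {R : Type*} [CommRing R] [Fintype ι] [DecidableEq ι]
    [Nontrivial ι] (hσ : σ.IsCycleOn Set.univ) (s : ι → R) :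
    (1 - Matrix.diagonal s * σ.permMatrix R).det = 1 - ∏ i, s i := by
  have hne (i : ι) : σ i ≠ i := hσ.apply_ne Set.nontrivial_univ (Set.mem_univ i)
  have hcycle : σ.IsCycle :=
    Equiv.Perm.isCycle_iff_exists_isCycleOn.2
      ⟨Set.univ, Set.nontrivial_univ, hσ, fun i _ => Set.mem_univ i⟩
  have hsupp : σ.support = Finset.univ := by ext i; simp [hne]
  have hentry (i j : ι) : (1 - Matrix.diagonal s * σ.permMatrix R) i j =
      (if i = j then 1 else 0) - (if σ i = j then s i else 0) := by
    simp [Matrix.one_apply, Equiv.toPEquiv_apply, PEquiv.toMatrix_apply, eq_comm]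
  have hsign : (σ.sign : R) * ∏ i, -s i = -∏ i, s i := by
    rw [Finset.prod_neg, hcycle.sign, hsupp]
    push_cast
    rw [neg_mul, ← mul_assoc, ← mul_pow]
    simp
  -- In the Leibniz expansion only the identity and `σ` avoid the zero entries.
  rw [← Matrix.det_transpose, Matrix.det_apply', Fintype.sum_eq_add 1 σ hcycle.ne_one.symm]
  · simp [hne, hsign, sub_eq_add_neg, fun i => (hne i).symm]
  · rintro τ ⟨h1, h2⟩
    obtain ⟨i, hi⟩ : ∃ i, ¬ (τ i = i ∨ τ i = σ i) := by
      by_contra! h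
      exact (eq_one_or_eq_of_forall_apply_eq_self_or_eq hσ h).elim h1 h2
    rw [not_or] at hi
    refine mul_eq_zero_of_right _ (Finset.prod_eq_zero (Finset.mem_univ i) ?_)
    rw [Matrix.transpose_apply, hentry, if_neg (Ne.symm hi.1), if_neg (Ne.symm hi.2), sub_zero]

@[to_additive sum_range_pow_succ_apply_of_isCycleOn]
theorem prod_range_pow_succ_apply_of_isCycleOn {M : Type*} [CommMonoid M] [DecidableEq ι]
    {s : Finset ι} (hσ : σ.IsCycleOn s) {a : ι} (ha : a ∈ s) (f : ι → M) :
    ∏ l ∈ Finset.range (s.card - 1), f ((σ ^ (l + 1)) a) = ∏ j ∈ s.erase a, f j := by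
  refine Finset.prod_nbij (fun l => (σ ^ (l + 1)) a) (fun l hl => ?_) (fun l hl k hk h => ?_)
    (fun j hj => ?_) fun _ _ => rfl
  · have hl := Finset.mem_range.1 hl
    refine Finset.mem_erase.2 ⟨fun h => ?_, (hσ.1.perm_pow (l + 1)).mapsTo ha⟩
    have := Nat.le_of_dvd l.succ_pos ((hσ.pow_apply_eq ha).1 h)
    omega
  · have hl := Finset.mem_range.1 hl
    have hk := Finset.mem_range.1 hk
    have := ((hσ.pow_apply_eq_pow_apply ha).1 h).eq_of_lt_of_lt (by omega) (by omega)
    omega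
  · obtain ⟨hja, hjs⟩ := Finset.mem_erase.1 hj
    obtain ⟨n, hn, rfl⟩ := hσ.exists_pow_eq ha hjs
    cases n with
    | zero => simp at hja
    | succ l => exact ⟨l, Finset.mem_coe.2 (Finset.mem_range.2 (by omega)), rfl⟩

theorem abs_sub_prod_mul_le_sum_range {s : ℕ → ℝ} (hs : ∀ l, |s l| ≤ 1) (u : ℕ → ℝ) (n : ℕ) :
    |u 0 - (∏ l ∈ Finset.range n, s l) * u n| ≤
      ∑ l ∈ Finset.range n, |u l - s l * u (l + 1)| := by
  calc |u 0 - (∏ l ∈ Finset.range n, s l) * u n|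
      ≤ ∑ l ∈ Finset.range n, |(∏ k ∈ Finset.range l, s k) * (u l - s l * u (l + 1))| := by
        have h := dist_le_range_sum_dist (fun l => (∏ k ∈ Finset.range l, s k) * u l) n
        simpa only [Real.dist_eq, Finset.prod_range_succ, Finset.prod_range_zero, one_mul, mul_sub,
          mul_assoc] using h
    _ ≤ ∑ l ∈ Finset.range n, |u l - s l * u (l + 1)| := by
        refine Finset.sum_le_sum fun l _ => ?_
        rw [abs_mul, Finset.abs_prod]
        exact mul_le_of_le_one_left (abs_nonneg _)
          (Finset.prod_le_one (fun _ _ => abs_nonneg _) fun k _ => hs k)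

theorem abs_apply_sub_prod_erase_mul_le [DecidableEq ι] {t : Finset ι} (hσ : σ.IsCycleOn t)
    {i : ι} (hi : i ∈ t) {s : ι → ℝ} (hs : ∀ j, |s j| ≤ 1) (u : ι → ℝ) :
    |u (σ i) - (∏ j ∈ t.erase i, s j) * u i| ≤ ∑ j ∈ t.erase i, |u j - s j * u (σ j)| := by
  have hcard : t.card - 1 + 1 = t.card := Nat.sub_add_cancel (Finset.card_pos.2 ⟨i, hi⟩)
  have h := abs_sub_prod_mul_le_sum_range (fun l => hs ((σ ^ (l + 1)) i))
    (fun l => u ((σ ^ (l + 1)) i)) (t.card - 1)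
  simp only [pow_succ' σ (_ + 1), Equiv.Perm.mul_apply] at h
  rwa [prod_range_pow_succ_apply_of_isCycleOn hσ hi,
    sum_range_pow_succ_apply_of_isCycleOn hσ hi (fun j => |u j - s j * u (σ j)|), hcard,
    hσ.pow_card_apply hi, zero_add, pow_one] at h

end CyclicPerm

section McCormick

/-- The McCormick inequalities, the convex hull of the graph of `w = u * v` on `[0,1]^2`: the
constraints of `QSet` on one edge. -/
def McCormick (u v w : ℝ) : Prop :=
  0 ≤ w ∧ w ≤ u ∧ w ≤ v ∧ u + v ≤ 1 + w

theorem mcCormick_comm {u v w : ℝ} : McCormick u v w ↔ McCormick v u w := by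
  simp only [McCormick, add_comm u, and_left_comm]

theorem McCormick.left_mem_Icc {u v w : ℝ} (h : McCormick u v w) : u ∈ Set.Icc (0 : ℝ) 1 := by
  obtain ⟨h0, hu, hv, huv⟩ := h
  constructor <;> linarith

theorem McCormick.product_mem_Icc {u v w : ℝ} (h : McCormick u v w) : w ∈ Set.Icc (0 : ℝ) 1 := by
  obtain ⟨h0, hu, hv, huv⟩ := h
  constructor <;> linarith

end McCormick

section Slack

variable {ι : Type*} [DecidableEq ι] (σ : Equiv.Perm ι) (B : Finset ι)

/-- The sign `-1` of the edges in `B` and `1` of the others. Edges are indexed by their tails: `i`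
stands for the edge from `i` to `σ i`, and `B` for the set `A` of the odd cycle inequality. -/
def edgeSign (i : ι) : ℝ :=
  if i ∈ B then -1 else 1

/-- The slack of the first of the two inequalities of the edge `i` that are tight at the vertex
`x = 1/2`, `y = 0` on `B`, `y = 1/2` off `B` of the relaxation: `0 ≤ y i` on `B`, and `y i ≤ x i`
off `B`. -/
def tailSlack (p : (ι → ℝ) × (ι → ℝ)) (i : ι) : ℝ :=
  if i ∈ B then p.2 i else p.1 i - p.2 i

/-- The slack of the second of the two inequalities of the edge `i` that are tight at the vertex
described at `tailSlack`: `x i + x (σ i) ≤ 1 + y i` on `B`, and `y i ≤ x (σ i)` off `B`. -/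
def headSlack (p : (ι → ℝ) × (ι → ℝ)) (i : ι) : ℝ :=
  if i ∈ B then 1 + p.2 i - p.1 i - p.1 (σ i) else p.1 (σ i) - p.2 i

/-- The affine coordinates given by all the slacks of the inequalities tight at the vertex described
at `tailSlack`. -/
def slackMap (p : (ι → ℝ) × (ι → ℝ)) : ι ⊕ ι → ℝ :=
  Sum.elim (tailSlack B p) (headSlack σ B p)

theorem abs_edgeSign (i : ι) : |edgeSign B i| = 1 := by
  unfold edgeSign
  split_ifs <;> simp

theorem edgeSign_mul_self (i : ι) : edgeSign B i * edgeSign B i = 1 := by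
  unfold edgeSign
  split_ifs <;> simp

theorem prod_edgeSign [Fintype ι] : ∏ i, edgeSign B i = (-1) ^ B.card := by
  simp [edgeSign]

variable {B}

theorem prod_erase_edgeSign [Fintype ι] (hB : Odd B.card) (i : ι) :
    ∏ j ∈ Finset.univ.erase i, edgeSign B j = -edgeSign B i := by
  have h := Finset.mul_prod_erase Finset.univ (edgeSign B) (Finset.mem_univ i)
  rw [prod_edgeSign, hB.neg_one_pow] at h
  linear_combination edgeSign B i * h -
    (∏ j ∈ Finset.univ.erase i, edgeSign B j) * edgeSign_mul_self B i

variable (B)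

theorem headSlack_eq_tailSlack_add (p : (ι → ℝ) × (ι → ℝ)) (i : ι) :
    headSlack σ B p i =
      tailSlack B p i + ((1 / 2 - p.1 i) - edgeSign B i * (1 / 2 - p.1 (σ i))) := by
  unfold headSlack tailSlack edgeSign
  split_ifs <;> ring

theorem measurePreserving_half_sub_tailSlack [Fintype ι] :
    MeasurePreserving (fun p : (ι → ℝ) × (ι → ℝ) => ((fun _ => 1 / 2) - p.1, tailSlack B p)) := by
  refine (Measure.measurePreserving_sub_left volume (fun _ : ι => (1 / 2 : ℝ))).skew_product
    (g := fun x y => tailSlack B (x, y)) ?_ (ae_of_all _ fun x => MeasurePreserving.map_eq ?_)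
  · refine measurable_pi_lambda _ fun i => ?_
    simp only [Function.uncurry, tailSlack]
    split_ifs <;> fun_prop
  · refine volume_preserving_pi (f := fun i t => if i ∈ B then t else x i - t) fun i => ?_
    split_ifs
    · exact MeasurePreserving.id _
    · exact Measure.measurePreserving_sub_left volume (x i)

variable {σ B}

theorem measurable_slackMap : Measurable (slackMap σ B) := by
  refine measurable_pi_lambda _ fun i => ?_
  rcases i with i | i <;> simp only [slackMap, tailSlack, headSlack, Sum.elim_inl, Sum.elim_inr] <;>
    split_ifs <;> fun_prop

theorem volume_preimage_slackMap [Fintype ι] [Nontrivial ι] (hσ : σ.IsCycleOn Set.univ)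
    (hB : Odd B.card) {T : Set (ι ⊕ ι → ℝ)} (hT : MeasurableSet T) :
    volume (slackMap σ B ⁻¹' T) = 2⁻¹ * volume T := by
  set M := 1 - Matrix.diagonal (edgeSign B) * σ.permMatrix ℝ
  set S := fun q : (ι → ℝ) × (ι → ℝ) => Sum.elim q.2 (q.1 + q.2)
  set φ := fun p : (ι → ℝ) × (ι → ℝ) => ((fun _ => 1 / 2) - p.1, tailSlack B p)
  have hdet : LinearMap.det (Matrix.toLin' M) = 2 := by
    rw [LinearMap.det_toLin', det_one_sub_diagonal_mul_permMatrix hσ, prod_edgeSign,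
      hB.neg_one_pow]
    norm_num
  have hS : MeasurePreserving S :=
    measurePreserving_sumElim.comp (measurePreserving_prod_add_swap_right volume volume)
  have hfactor : slackMap σ B = S ∘ Prod.map (Matrix.toLin' M) id ∘ φ := by
    ext p (i | i)
    · rfl
    · simp [S, M, φ, slackMap, headSlack_eq_tailSlack_add, Matrix.permMatrix_mulVec,
        Matrix.mulVec_diagonal, add_comm]
  have hM := (LinearMap.continuous_of_finiteDimensional (Matrix.toLin' M)).measurable
  have hpre := (hS.measurable hT).preimage (hM.prodMap measurable_id)
  calc volume (slackMap σ B ⁻¹' T)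
      = volume (φ ⁻¹' (Prod.map (Matrix.toLin' M) id ⁻¹' (S ⁻¹' T))) := by rw [hfactor]; rfl
    _ = volume (Prod.map (Matrix.toLin' M) id ⁻¹' (S ⁻¹' T)) :=
        (measurePreserving_half_sub_tailSlack B).measure_preimage hpre.nullMeasurableSet
    _ = ENNReal.ofReal |(2 : ℝ)⁻¹| * volume (S ⁻¹' T) := by
        rw [← hdet]
        exact prod_preimage_prodMap_id volume volume (by rw [hdet]; exact two_ne_zero) _
    _ = 2⁻¹ * volume T := by
        rw [hS.measure_preimage hT.nullMeasurableSet, abs_of_pos (by norm_num),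
          ENNReal.ofReal_inv_of_pos two_pos, ENNReal.ofReal_ofNat]

-- The bound on the absolute value restates the two inequalities of the edge that are not slacks.
theorem mcCormick_iff_slack (p : (ι → ℝ) × (ι → ℝ)) (i : ι) :
    McCormick (p.1 i) (p.1 (σ i)) (p.2 i) ↔
      0 ≤ tailSlack B p i ∧ 0 ≤ headSlack σ B p i ∧
        |(p.1 (σ i) - 1 / 2) + edgeSign B i * (p.1 i - 1 / 2)| ≤
          1 - (tailSlack B p i + headSlack σ B p i) := by
  unfold McCormick tailSlack headSlack edgeSign
  split_ifs <;> rw [abs_le] <;> constructor <;> rintro ⟨h₁, h₂, h₃, h₄⟩ <;>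
    refine ⟨?_, ?_, ?_, ?_⟩ <;> linarith

theorem abs_apply_sub_half_add_le [Fintype ι] (hσ : σ.IsCycleOn Set.univ) (hB : Odd B.card)
    {p : (ι → ℝ) × (ι → ℝ)} (htail : ∀ i, 0 ≤ tailSlack B p i)
    (hhead : ∀ i, 0 ≤ headSlack σ B p i) (i : ι) :
    |(p.1 (σ i) - 1 / 2) + edgeSign B i * (p.1 i - 1 / 2)| ≤
      ∑ j ∈ Finset.univ.erase i, (tailSlack B p j + headSlack σ B p j) := by
  have hσ' : σ.IsCycleOn (Finset.univ : Finset ι) := by rwa [Finset.coe_univ]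
  have hround := abs_apply_sub_prod_erase_mul_le hσ' (Finset.mem_univ i)
    (fun j => (abs_edgeSign B j).le) (fun j => p.1 j - 1 / 2)
  rw [prod_erase_edgeSign hB, neg_mul, sub_neg_eq_add] at hround
  refine hround.trans (Finset.sum_le_sum fun j _ => ?_)
  have hslack := headSlack_eq_tailSlack_add σ B p j
  rw [abs_le]
  constructor <;> linarith [htail j, hhead j]

theorem slackMap_mem_cornerSimplex_iff [Fintype ι] (hσ : σ.IsCycleOn Set.univ) (hB : Odd B.card)
    (p : (ι → ℝ) × (ι → ℝ)) :
    slackMap σ B p ∈ cornerSimplex (ι ⊕ ι) 1 ↔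
      (∀ i, McCormick (p.1 i) (p.1 (σ i)) (p.2 i)) ∧
        ∑ i, (tailSlack B p i + headSlack σ B p i) < 1 := by
  simp only [cornerSimplex, slackMap, Set.mem_ofPred_eq, Sum.forall, Fintype.sum_sum_type,
    Sum.elim_inl, Sum.elim_inr, ← Finset.sum_add_distrib]
  refine and_congr_left fun hsum => ⟨fun ⟨htail, hhead⟩ i => ?_, fun h => ?_⟩
  · refine (mcCormick_iff_slack p i).2 ⟨htail i, hhead i, ?_⟩
    have hrest := abs_apply_sub_half_add_le hσ hB htail hhead i
    rw [← Finset.add_sum_erase _ _ (Finset.mem_univ i)] at hsum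
    linarith
  · exact ⟨fun i => ((mcCormick_iff_slack p i).1 (h i)).1,
      fun i => ((mcCormick_iff_slack p i).1 (h i)).2.1⟩

variable (σ B) in
theorem sum_tailSlack_add_headSlack [Fintype ι] (p : (ι → ℝ) × (ι → ℝ)) :
    ∑ i, (tailSlack B p i + headSlack σ B p i) =
      B.card - 2 * (∑ i ∈ B, (p.1 i + p.1 (σ i)) - ∑ i, p.1 i + ∑ i ∈ Bᶜ, p.2 i -
        ∑ i ∈ B, p.2 i) := by
  have hedge (i : ι) : tailSlack B p i + headSlack σ B p i = p.1 i + p.1 (σ i) - 2 * p.2 i +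
      if i ∈ B then 1 - 2 * (p.1 i + p.1 (σ i)) + 4 * p.2 i else 0 := by
    unfold tailSlack headSlack
    split_ifs <;> ring
  have hsplit : ∑ i ∈ Bᶜ, p.2 i = ∑ i, p.2 i - ∑ i ∈ B, p.2 i :=
    eq_sub_of_add_eq' (Finset.sum_add_sum_compl B p.2)
  simp only [hedge, Finset.sum_add_distrib, Finset.sum_sub_distrib, Finset.sum_ite_mem,
    Finset.univ_inter, ← Finset.mul_sum, Equiv.sum_comp σ p.1, hsplit, Finset.sum_const,
    nsmul_eq_mul]
  ring

end Slack

section Incidence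

theorem sum_filter_eq_two_sub_sum_filter_eq_zero {ι R : Type*} [Fintype ι] [CommRing R]
    {d : ι → ℕ} (hd : ∀ i, d i ≤ 2) (x : ι → R) :
    ∑ i with d i = 2, x i - ∑ i with d i = 0, x i = ∑ i, d i * x i - ∑ i, x i := by
  rw [Finset.sum_filter, Finset.sum_filter, ← Finset.sum_sub_distrib, ← Finset.sum_sub_distrib]
  refine Finset.sum_congr rfl fun i _ => ?_
  have := hd i
  interval_cases d i <;> norm_num
  ring

variable {ι : Type*} [DecidableEq ι] (B : Finset ι)

theorem card_filter_mem_mk_apply_le_two (σ : Equiv.Perm ι) (v : ι) :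
    (B.filter fun i => v ∈ s(i, σ i)).card ≤ 2 := by
  refine (Finset.card_le_card fun i hi => ?_).trans (Finset.card_le_two (a := v) (b := σ.symm v))
  rcases Sym2.mem_iff.1 (Finset.mem_filter.1 hi).2 with rfl | rfl <;> simp

theorem sum_card_filter_mem_mk_apply_mul {R : Type*} [Fintype ι] [Semiring R]
    {f : ι → ι} (hf : ∀ i ∈ B, f i ≠ i) (x : ι → R) :
    ∑ v, ((B.filter fun i => v ∈ s(i, f i)).card : R) * x v = ∑ i ∈ B, (x i + x (f i)) := by
  simp only [← nsmul_eq_mul, ← Finset.sum_const, Finset.sum_filter]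
  rw [Finset.sum_comm]
  refine Finset.sum_congr rfl fun i hi => ?_
  have hpair : (Finset.univ.filter fun v => v ∈ s(i, f i)) = {i, f i} := by
    ext v
    simp
  rw [← Finset.sum_filter, hpair, Finset.sum_pair (hf i hi).symm]

end Incidence

section CyclicLabelling

theorem mem_QSet_iff_forall_mcCormick {V : Type*} {G : SimpleGraph V} {f : V → V}
    (e : V ≃ G.edgeSet) (he : ∀ i, (e i : Sym2 V) = s(i, f i))
    (p : (V → ℝ) × (G.edgeSet → ℝ)) :
    p ∈ QSet G ↔ ∀ i, McCormick (p.1 i) (p.1 (f i)) (p.2 (e i)) := by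
  constructor
  · rintro ⟨-, -, hp⟩ i
    have hadj : G.Adj i (f i) := by
      rw [← SimpleGraph.mem_edgeSet, ← he]
      exact (e i).2
    have hei : e i = ⟨s(i, f i), hadj⟩ := Subtype.ext (he i)
    exact hei ▸ hp i (f i) hadj
  · intro hp
    refine ⟨fun i => (hp i).left_mem_Icc, fun a => ?_, fun i j hij => ?_⟩
    · obtain ⟨i, rfl⟩ := e.surjective a
      exact (hp i).product_mem_Icc
    · obtain ⟨k, hk⟩ := e.surjective ⟨s(i, j), hij⟩
      change McCormick _ _ _
      have hends : s(k, f k) = s(i, j) := by rw [← he, hk]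
      rw [← hk]
      rcases Sym2.eq_iff.1 hends with ⟨rfl, rfl⟩ | ⟨rfl, rfl⟩
      · exact hp k
      · exact mcCormick_comm.1 (hp k)

variable {m : ℕ} {σ : Equiv.Perm (Fin m)} {e : Fin m ≃ (cycleG m).edgeSet}

theorem OC_map_iff (hσ : ∀ i, σ i ≠ i) (he : ∀ i, (e i : Sym2 (Fin m)) = s(i, σ i))
    (B : Finset (Fin m)) (p : (Fin m → ℝ) × ((cycleG m).edgeSet → ℝ)) :
    OC (B.map e.toEmbedding) p ↔
      ∑ i ∈ B, (p.1 i + p.1 (σ i)) - ∑ i, p.1 i + ∑ i ∈ Bᶜ, p.2 (e i) - ∑ i ∈ B, p.2 (e i) ≤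
        (B.card / 2 : ℕ) := by
  have hdeg (v : Fin m) : ((B.map e.toEmbedding).filter
      fun a : (cycleG m).edgeSet => v ∈ (a : Sym2 (Fin m))).card =
      (B.filter fun i => v ∈ s(i, σ i)).card := by
    simp [Finset.filter_map, he]
  have hcompl : (B.map e.toEmbedding)ᶜ = Bᶜ.map e.toEmbedding := by
    ext a
    simp
  unfold OC
  simp only [hdeg, hcompl, Finset.sum_map, Finset.card_map, Equiv.coe_toEmbedding]
  rw [sum_filter_eq_two_sub_sum_filter_eq_zero (card_filter_mem_mk_apply_le_two B σ),
    sum_card_filter_mem_mk_apply_mul B fun i _ => hσ i]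

theorem not_OC_map_iff_sum_slack_lt_one (hσ : ∀ i, σ i ≠ i)
    (he : ∀ i, (e i : Sym2 (Fin m)) = s(i, σ i)) {B : Finset (Fin m)} (hB : Odd B.card)
    (p : (Fin m → ℝ) × ((cycleG m).edgeSet → ℝ)) :
    ¬ OC (B.map e.toEmbedding) p ↔
      ∑ i, (tailSlack B (p.1, p.2 ∘ e) i + headSlack σ B (p.1, p.2 ∘ e) i) < 1 := by
  have hfloor : ((B.card / 2 : ℕ) : ℝ) = (B.card - 1) / 2 := by
    obtain ⟨k, hk⟩ := hB
    rw [hk, show (2 * k + 1) / 2 = k by omega]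
    push_cast
    ring
  rw [OC_map_iff hσ he, sum_tailSlack_add_headSlack, hfloor, not_le]
  simp only [Function.comp_apply]
  constructor <;> intro h <;> linarith

theorem setOf_mem_QSet_and_not_OC_map [Nontrivial (Fin m)] (hσ : σ.IsCycleOn Set.univ)
    (he : ∀ i, (e i : Sym2 (Fin m)) = s(i, σ i)) {B : Finset (Fin m)} (hB : Odd B.card) :
    {p | p ∈ QSet (cycleG m) ∧ ¬ OC (B.map e.toEmbedding) p} =
      Prod.map id (· ∘ e) ⁻¹' (slackMap σ B ⁻¹' cornerSimplex (Fin m ⊕ Fin m) 1) := by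
  have hne (i : Fin m) : σ i ≠ i := hσ.apply_ne Set.nontrivial_univ (Set.mem_univ i)
  ext p
  simp only [Set.mem_preimage, slackMap_mem_cornerSimplex_iff hσ hB, Set.mem_ofPred_eq,
    mem_QSet_iff_forall_mcCormick e he, not_OC_map_iff_sum_slack_lt_one hne he hB]
  rfl

end CyclicLabelling

section CycleGraph

variable {m : ℕ}

theorem isCycleOn_finRotate (hm : 2 ≤ m) : (finRotate m).IsCycleOn Set.univ := by
  have hcycle := (isCycle_finRotate_of_le hm).isCycleOn
  have hsupp : {i | finRotate m i ≠ i} = Set.univ := by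
    rw [← Equiv.Perm.coe_support_eq_set_support, support_finRotate_of_le hm, Finset.coe_univ]
  rwa [hsupp] at hcycle

theorem finRotate_apply_ne (hm : 2 ≤ m) (i : Fin m) : finRotate m i ≠ i :=
  have : Nontrivial (Fin m) := Fin.nontrivial_iff_two_le.2 hm
  (isCycleOn_finRotate hm).apply_ne Set.nontrivial_univ (Set.mem_univ i)

theorem finRotate_finRotate_ne (hm : 3 ≤ m) (i : Fin m) : finRotate m (finRotate m i) ≠ i := by
  intro h
  have hcycle : (finRotate m).IsCycleOn (Finset.univ : Finset (Fin m)) := by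
    rw [Finset.coe_univ]
    exact isCycleOn_finRotate (by omega)
  have hdvd := (hcycle.pow_apply_eq (Finset.mem_univ i) (n := 2)).1 (by rwa [sq])
  rw [Finset.card_fin] at hdvd
  exact absurd (Nat.le_of_dvd two_pos hdvd) (by omega)

theorem cycleG_adj {i j : Fin m} :
    (cycleG m).Adj i j ↔ i ≠ j ∧ (finRotate m i = j ∨ finRotate m j = i) := by
  have hsucc (i j : Fin m) : ((i : ℕ) + 1) % m = j ↔ finRotate m i = j := by
    have : NeZero m := ⟨i.pos.ne'⟩
    rw [finRotate_apply, Fin.ext_iff, Fin.val_add, Fin.val_one', Nat.add_mod_mod]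
  simp only [cycleG, SimpleGraph.fromRel_adj, hsucc]

theorem cycleG_adj_finRotate (hm : 2 ≤ m) (i : Fin m) : (cycleG m).Adj i (finRotate m i) :=
  cycleG_adj.2 ⟨(finRotate_apply_ne hm i).symm, Or.inl rfl⟩

theorem bijective_mk_finRotate (hm : 3 ≤ m) :
    Function.Bijective fun i : Fin m =>
      (⟨s(i, finRotate m i), cycleG_adj_finRotate (by omega) i⟩ : (cycleG m).edgeSet) := by
  refine ⟨fun i j hij => ?_, ?_⟩
  · rcases Sym2.eq_iff.1 (Subtype.ext_iff.1 hij) with ⟨h, -⟩ | ⟨rfl, h⟩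
    · exact h
    · exact absurd h (finRotate_finRotate_ne hm j)
  · rintro ⟨a, ha⟩
    induction a with | _ i j
    obtain (rfl : finRotate m i = j) | (rfl : finRotate m j = i) := (cycleG_adj.1 ha).2
    · exact ⟨i, rfl⟩
    · exact ⟨j, Subtype.ext Sym2.eq_swap⟩

/-- The edges of `C_m` labelled by their tails, for the orientation `i → i + 1`. -/
def cycleEdgeEquiv (hm : 3 ≤ m) : Fin m ≃ (cycleG m).edgeSet :=
  Equiv.ofBijective _ (bijective_mk_finRotate hm)

theorem coe_cycleEdgeEquiv (hm : 3 ≤ m) (i : Fin m) :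
    (cycleEdgeEquiv hm i : Sym2 (Fin m)) = s(i, finRotate m i) :=
  rfl

end CycleGraph

/-- The volume of the part of `Q(C_m)` violating a single odd cycle inequality is
`1 / (2 * (2m)!)`. -/
theorem volume_cutoff_oddCycle (m : ℕ) (hm : 3 ≤ m)
    (A : Finset (cycleG m).edgeSet) (hA : Odd A.card) :
    volume {p | p ∈ QSet (cycleG m) ∧ ¬ OC A p} =
      1 / (2 * (Nat.factorial (2 * m) : ENNReal)) := by
  have : Nontrivial (Fin m) := Fin.nontrivial_iff_two_le.2 (by omega)
  have hσ := isCycleOn_finRotate (m := m) (by omega)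
  obtain ⟨B, rfl⟩ : ∃ B, B.map (cycleEdgeEquiv hm).toEmbedding = A :=
    ⟨A.map (cycleEdgeEquiv hm).symm.toEmbedding, by ext; simp⟩
  rw [Finset.card_map] at hA
  have hsimplex := measurableSet_cornerSimplex (Fin m ⊕ Fin m) 1
  calc volume {p | p ∈ QSet (cycleG m) ∧ ¬ OC (B.map (cycleEdgeEquiv hm).toEmbedding) p}
      = volume (slackMap (finRotate m) B ⁻¹' cornerSimplex (Fin m ⊕ Fin m) 1) := by
        rw [setOf_mem_QSet_and_not_OC_map hσ (coe_cycleEdgeEquiv hm) hA]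
        exact ((MeasurePreserving.id volume).prod
          (measurePreserving_comp_equiv (cycleEdgeEquiv hm))).measure_preimage
            (measurable_slackMap hsimplex).nullMeasurableSet
    _ = 2⁻¹ * volume (cornerSimplex (Fin m ⊕ Fin m) 1) := volume_preimage_slackMap hσ hA hsimplex
    _ = 2⁻¹ * ENNReal.ofReal (1 / (2 * m).factorial) := by
        rw [volume_cornerSimplex _ one_pos, Fintype.card_sum, Fintype.card_fin, ← two_mul, one_pow]
    _ = 1 / (2 * (Nat.factorial (2 * m) : ENNReal)) := by
        rw [one_div, one_div, ENNReal.ofReal_inv_of_pos (by positivity), ENNReal.ofReal_natCast,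
          ENNReal.mul_inv (by simp) (by simp)]
end
end
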